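/- Let C1 ⊆ F_{q^m}^n be a linear code and C2 ⊊ C1 a subcode. Then the first RGRW satisfies M_{R,1}(C1,C2) ≤ min{ n − dim C1, (m−1)(dim C1 − dim C2), m(n − dim C1)/(n − dim C2) } + 1, where the third term is a rational number and the inequality is understood over the rationals. -/

import Mathlib

open scoped BigOperators

noncomputable section

variable (q : ℕ) (Fq : Type*) {Fqm : Type*} [Field Fq] [Field Fqm] [Algebra Fq Fqm]

/-- `V = V^q`: the image of `V` under the coordinatewise `q`-th power map equals `V`
(membership in the family `Γ(F_{q^m}^n)`). -/
def IsGalClosed {n : ℕ} (V : Submodule Fqm (Fin n → Fqm)) : Prop :=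
  (fun v : Fin n → Fqm => fun i => v i ^ q) '' (V : Set (Fin n → Fqm)) =
    (V : Set (Fin n → Fqm))

/-- The `i`-th relative dimension/intersection profile (RDIP) of `C1` and `C2`. -/
noncomputable def RDIP {n : ℕ} (C1 C2 : Submodule Fqm (Fin n → Fqm)) (i : ℕ) : ℕ :=
  sSup {d : ℕ | ∃ V : Submodule Fqm (Fin n → Fqm), IsGalClosed q V ∧
    Module.finrank Fqm ↥V = i ∧
    d = Module.finrank Fqm ↥(C1 ⊓ V) - Module.finrank Fqm ↥(C2 ⊓ V)}

/-- The `i`-th relative generalized rank weight (RGRW) of `C1` and `C2`. -/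
noncomputable def RGRW {n : ℕ} (C1 C2 : Submodule Fqm (Fin n → Fqm)) (i : ℕ) : ℕ :=
  sInf {d : ℕ | ∃ V : Submodule Fqm (Fin n → Fqm), IsGalClosed q V ∧
    d = Module.finrank Fqm ↥V ∧
    i ≤ Module.finrank Fqm ↥(C1 ⊓ V) - Module.finrank Fqm ↥(C2 ⊓ V)}

/-- The rank weight `d_R(x,0)` of a vector: the `F_q`-dimension of the `F_q`-span of
its coordinates. -/
noncomputable def rankWeight {ι : Type*} (x : ι → Fqm) : ℕ :=
  Module.finrank Fq ↥(Submodule.span Fq (Set.range x))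

/-- The minimum rank distance of a (nonzero) linear code. -/
noncomputable def minRankDist {ι : Type*} (C : Submodule Fqm (ι → Fqm)) : ℕ :=
  sInf {d : ℕ | ∃ x, x ∈ C ∧ x ≠ 0 ∧ d = rankWeight Fq x}

/-- The dual code with respect to the standard bilinear form `⟨x,y⟩ = ∑ i, x i * y i`. -/
def dualCode {n : ℕ} (V : Submodule Fqm (Fin n → Fqm)) : Submodule Fqm (Fin n → Fqm) where
  carrier := {x | ∀ v ∈ V, ∑ i, x i * v i = 0}
  add_mem' := by
    intro a b ha hb v hv
    have h1 := ha v hv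
    have h2 := hb v hv
    simp only [Set.mem_setOf_eq] at *
    simp only [Pi.add_apply, add_mul]
    rw [Finset.sum_add_distrib, h1, h2, add_zero]
  zero_mem' := by
    intro v hv
    simp
  smul_mem' := by
    intro c x hx v hv
    have h := hx v hv
    simp only [Set.mem_setOf_eq] at *
    simp only [Pi.smul_apply, smul_eq_mul, mul_assoc]
    rw [← Finset.mul_sum, h, mul_zero]


/-! A codeword `x ∈ C1 \ C2` lies in the Galois closed space obtained by expanding its coordinates
in a basis of their `Fq`-span, so `M_{R,1}(C1, C2)` is at most the rank weight of `x`. To find such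
an `x` of small rank weight, choose coordinates `S` avoiding an information set of `C2` and an
`Fq`-subspace `U` of `Fqm`, and let `W` be the space of vectors supported on `S` with entries in
`U`. Then `W` meets `C2` trivially, but it contains a nonzero codeword of `C1` as soon as
`m * n < |S| * dim U + m * dim C1`, and the rank weight of that codeword is at most `|S|` and at
most `dim U`. The first term of the minimum comes from `U = Fqm`, the third one from taking `S` as
large as possible, and the second one from the trivial bound `m` on the rank weight. -/

section RankWeight

variable {Fq} {ι : Type*} {x : ι → Fqm}

theorem rankWeight_le_finrank_of_forall_mem {U : Submodule Fq Fqm} [FiniteDimensional Fq U]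
    (hx : ∀ i, x i ∈ U) : rankWeight Fq x ≤ Module.finrank Fq U :=
  Submodule.finrank_mono (Submodule.span_le.2 (Set.range_subset_iff.2 hx))

theorem rankWeight_le_card_of_forall_notMem_eq_zero {S : Finset ι} (hx : ∀ i ∉ S, x i = 0) :
    rankWeight Fq x ≤ S.card := by
  classical
  have hmem (i : ι) : x i ∈ Submodule.span Fq (S.image x : Set Fqm) := by
    by_cases hi : i ∈ S
    · exact Submodule.subset_span (Finset.mem_image_of_mem x hi)
    · exact hx i hi ▸ Submodule.zero_mem _
  exact (rankWeight_le_finrank_of_forall_mem hmem).trans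
    ((finrank_span_finset_le_card _).trans Finset.card_image_le)

variable (Fq x) in
theorem exists_mem_span_range_algebraMap_comp [Finite ι] :
    ∃ a : Fin (rankWeight Fq x) → ι → Fq,
      x ∈ Submodule.span Fqm (Set.range fun j => algebraMap Fq Fqm ∘ a j) := by
  have : FiniteDimensional Fq (Submodule.span Fq (Set.range x)) :=
    FiniteDimensional.span_of_finite Fq (Set.finite_range x)
  let b : Module.Basis (Fin (rankWeight Fq x)) Fq (Submodule.span Fq (Set.range x)) :=
    Module.finBasis Fq _
  let y (i : ι) : Submodule.span Fq (Set.range x) := ⟨x i, Submodule.subset_span ⟨i, rfl⟩⟩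
  refine ⟨fun j i => b.repr (y i) j, Submodule.mem_span_range_iff_exists_fun _ |>.2
    ⟨fun j => (b j : Fqm), funext fun i => ?_⟩⟩
  have hexpand : ∑ j, b.repr (y i) j • (b j : Fqm) = x i := by
    simpa only [Submodule.coe_sum, Submodule.coe_smul] using
      congrArg Subtype.val (b.sum_repr (y i))
  simpa only [Finset.sum_apply, Pi.smul_apply, Function.comp_apply, smul_eq_mul,
    ← Algebra.commutes, ← Algebra.smul_def] using hexpand

end RankWeight

section GaloisClosed

variable {q Fq} [Fintype Fq] [Algebra.IsAlgebraic Fq Fqm] {n : ℕ}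

variable (Fq Fqm) in
/-- The map `v ↦ v^q` on `ι → Fqm`, where `q = |Fq|`, bundled as a Frobenius-semilinear map so
that it can be pushed through spans. -/
def frobeniusPi (ι : Type*) :
    (ι → Fqm) →ₛₗ[((FiniteField.frobeniusAlgEquivOfAlgebraic Fq Fqm).toRingEquiv : Fqm →+* Fqm)]
      (ι → Fqm) where
  toFun v i := FiniteField.frobeniusAlgEquivOfAlgebraic Fq Fqm (v i)
  map_add' v w := funext fun i => map_add _ (v i) (w i)
  map_smul' c v := funext fun i => map_mul _ c (v i)

theorem isGalClosed_span_range_algebraMap_comp {κ : Type*} (hq : Fintype.card Fq = q)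
    (a : κ → Fin n → Fq) :
    IsGalClosed q (Submodule.span Fqm (Set.range fun j => algebraMap Fq Fqm ∘ a j)) := by
  subst hq
  have hfix (j : κ) : frobeniusPi Fq Fqm (Fin n) (algebraMap Fq Fqm ∘ a j) =
      algebraMap Fq Fqm ∘ a j :=
    funext fun i => AlgEquiv.commutes _ (a j i)
  have hmap := Submodule.map_span (frobeniusPi Fq Fqm (Fin n))
    (Set.range fun j => algebraMap Fq Fqm ∘ a j)
  simp only [← Set.range_comp, Function.comp_def (frobeniusPi Fq Fqm (Fin n)), hfix] at hmap
  exact congrArg SetLike.coe hmap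

theorem RGRW_one_le_finrank_of_mem {C1 C2 V : Submodule Fqm (Fin n → Fqm)} (h : C2 ≤ C1)
    (hV : IsGalClosed q V) {x : Fin n → Fqm} (hx1 : x ∈ C1) (hx2 : x ∉ C2) (hxV : x ∈ V) :
    RGRW q C1 C2 1 ≤ Module.finrank Fqm V := by
  have hlt : C2 ⊓ V < C1 ⊓ V :=
    lt_of_le_of_ne (inf_le_inf_right V h) fun heq =>
      hx2 (heq.ge (Submodule.mem_inf.2 ⟨hx1, hxV⟩)).1
  exact Nat.sInf_le ⟨V, hV, rfl, Nat.sub_pos_of_lt (Submodule.finrank_lt_finrank_of_lt hlt)⟩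

theorem RGRW_one_le_rankWeight (hq : Fintype.card Fq = q)
    {C1 C2 : Submodule Fqm (Fin n → Fqm)} (h : C2 ≤ C1) {x : Fin n → Fqm} (hx1 : x ∈ C1)
    (hx2 : x ∉ C2) : RGRW q C1 C2 1 ≤ rankWeight Fq x := by
  obtain ⟨a, hxa⟩ := exists_mem_span_range_algebraMap_comp Fq x
  calc RGRW q C1 C2 1
      ≤ Module.finrank Fqm (Submodule.span Fqm (Set.range fun j => algebraMap Fq Fqm ∘ a j)) :=
        RGRW_one_le_finrank_of_mem h (isGalClosed_span_range_algebraMap_comp hq a) hx1 hx2 hxa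
    _ ≤ rankWeight Fq x := (finrank_range_le_card _).trans_eq (Fintype.card_fin _)

end GaloisClosed

section LinearAlgebra

variable {K ι : Type*} [Field K]

/-- `J` is an information set of the code `C`: a set of `dim C` coordinates that determine the
codewords of `C`. -/
def IsInformationSet (C : Submodule K (ι → K)) (J : Finset ι) : Prop :=
  J.card = Module.finrank K C ∧ ∀ x ∈ C, (∀ i ∈ J, x i = 0) → x = 0

theorem exists_isInformationSet [Finite ι] (C : Submodule K (ι → K)) :
    ∃ J : Finset ι, IsInformationSet C J := by
  classical
  have := Fintype.ofFinite ι
  let coord (i : ι) : Module.Dual K C := LinearMap.proj i ∘ₗ C.subtype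
  have hcoord : Submodule.span K (Set.range coord) = ⊤ := by
    refine eq_top_iff.2 fun f _ => mem_span_of_iInf_ker_le_ker fun x hx => ?_
    have hx0 : x = 0 := Subtype.ext (funext fun i => (Submodule.mem_iInf _).1 hx i)
    exact hx0 ▸ Submodule.zero_mem _
  obtain ⟨κ, a, ha, hspan, hli⟩ := exists_linearIndependent' K coord
  have := Fintype.ofInjective a ha
  rw [hcoord] at hspan
  refine ⟨Finset.univ.image a, ?_, fun x hx hxJ => ?_⟩
  · rw [Finset.card_image_of_injective _ ha, Finset.card_univ, ← finrank_span_eq_card hli, hspan,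
      finrank_top, Subspace.dual_finrank_eq]
  · have hker : Submodule.span K (Set.range (coord ∘ a)) ≤
        LinearMap.ker (Module.Dual.eval K C ⟨x, hx⟩) :=
      Submodule.span_le.2 (Set.range_subset_iff.2 fun k =>
        hxJ (a k) (Finset.mem_image_of_mem a (Finset.mem_univ k)))
    exact funext fun i => hker (hspan ▸ Submodule.mem_top : coord i ∈ _)

theorem exists_finrank_eq_of_le_finrank {V : Type*} [AddCommGroup V] [Module K V] {r : ℕ}
    (hr : r ≤ Module.finrank K V) : ∃ U : Submodule K V, Module.finrank K U = r := by
  obtain ⟨v, hv⟩ := exists_linearIndependent_of_le_finrank hr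
  exact ⟨_, (finrank_span_eq_card hv).trans (Fintype.card_fin r)⟩

theorem exists_mem_ne_zero_of_finrank_lt_add {V : Type*} [AddCommGroup V] [Module K V]
    [FiniteDimensional K V] {W W' : Submodule K V}
    (h : Module.finrank K V < Module.finrank K W + Module.finrank K W') :
    ∃ x ∈ W, x ∈ W' ∧ x ≠ 0 := by
  by_contra! hzero
  exact h.not_ge (Submodule.finrank_add_finrank_le_of_disjoint
    (Submodule.disjoint_def.2 hzero))

theorem finrank_submodule_fin_fun_le {n : ℕ} (C : Submodule K (Fin n → K)) :
    Module.finrank K C ≤ n :=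
  C.finrank_le.trans_eq (Module.finrank_fin_fun K)

end LinearAlgebra

section SmallRankWeight

variable {K L ι : Type*} [Field K] [Field L] [Algebra K L]

/-- The `K`-space of vectors supported on `S` with all entries in `U`. -/
def supportedWithEntries (S : Finset ι) (U : Submodule K L) : Submodule K (ι → L) :=
  Submodule.pi Set.univ (fun _ => U) ⊓ Submodule.pi (S : Set ι)ᶜ fun _ => ⊥

variable {S : Finset ι} {U : Submodule K L}

theorem mem_supportedWithEntries {x : ι → L} :
    x ∈ supportedWithEntries S U ↔ (∀ i, x i ∈ U) ∧ ∀ i ∉ S, x i = 0 := by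
  simp [supportedWithEntries, Submodule.mem_pi]

variable (S U) in
open scoped Classical in
/-- Restriction of the vectors of `supportedWithEntries S U` to the coordinates in `S`, with
extension by zero as its inverse. It serves to compute the dimension of that space. -/
def supportedWithEntriesEquiv : supportedWithEntries S U ≃ₗ[K] (S → U) where
  toFun x i := ⟨x.1 i, (mem_supportedWithEntries.1 x.2).1 i⟩
  map_add' _ _ := rfl
  map_smul' _ _ := rfl
  invFun y := ⟨fun i => if hi : i ∈ S then y ⟨i, hi⟩ else 0, mem_supportedWithEntries.2
    ⟨fun i => by split_ifs <;> simp, fun i hi => dif_neg hi⟩⟩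
  left_inv x := Subtype.ext <| funext fun i => by
    by_cases hi : i ∈ S
    · exact dif_pos hi
    · exact (dif_neg hi).trans ((mem_supportedWithEntries.1 x.2).2 i hi).symm
  right_inv y := funext fun i => Subtype.ext (dif_pos i.2)

variable (S U) in
theorem finrank_supportedWithEntries [FiniteDimensional K L] :
    Module.finrank K (supportedWithEntries S U) = S.card * Module.finrank K U := by
  rw [(supportedWithEntriesEquiv S U).finrank_eq, Module.finrank_pi_fintype, Finset.sum_const,
    Finset.card_univ, Fintype.card_coe, smul_eq_mul]

variable (K) in
theorem exists_mem_notMem_rankWeight_le [Fintype ι] [FiniteDimensional K L]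
    {C1 C2 : Submodule L (ι → L)} {s r : ℕ} (hs : s + Module.finrank L C2 ≤ Fintype.card ι)
    (hr : r ≤ Module.finrank K L)
    (h : Module.finrank K L * Fintype.card ι < s * r + Module.finrank K L * Module.finrank L C1) :
    ∃ x ∈ C1, x ∉ C2 ∧ rankWeight K x ≤ min s r := by
  classical
  obtain ⟨J, hJcard, hJ⟩ := exists_isInformationSet C2
  obtain ⟨S, hSJ, rfl⟩ : ∃ S ⊆ Jᶜ, S.card = s :=
    Finset.exists_subset_card_eq (by rw [Finset.card_compl]; omega)
  obtain ⟨U, rfl⟩ := exists_finrank_eq_of_le_finrank hr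
  have hdim : Module.finrank K (ι → L) < Module.finrank K (supportedWithEntries S U) +
      Module.finrank K (C1.restrictScalars K) := by
    have hC1 : Module.finrank K (C1.restrictScalars K) =
        Module.finrank K L * Module.finrank L C1 := (Module.finrank_mul_finrank K L C1).symm
    rwa [finrank_supportedWithEntries, hC1, Module.finrank_pi_fintype, Finset.sum_const,
      Finset.card_univ, smul_eq_mul, mul_comm]
  obtain ⟨x, hxW, hx1, hx0⟩ := exists_mem_ne_zero_of_finrank_lt_add hdim
  obtain ⟨hxU, hzero⟩ := mem_supportedWithEntries.1 hxW
  refine ⟨x, hx1, fun hx2 => hx0 (hJ x hx2 fun i hi => hzero i fun hiS => ?_), le_min ?_ ?_⟩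
  · exact Finset.mem_compl.1 (hSJ hiS) hi
  · exact rankWeight_le_card_of_forall_notMem_eq_zero hzero
  · exact rankWeight_le_finrank_of_forall_mem hxU

end SmallRankWeight

section Bounds

variable {q Fq} [Fintype Fq] [FiniteDimensional Fq Fqm] {n : ℕ}
  {C1 C2 : Submodule Fqm (Fin n → Fqm)}

theorem RGRW_one_le_min (hq : Fintype.card Fq = q) (h12 : C2 ≤ C1) {s r : ℕ}
    (hs : s + Module.finrank Fqm C2 ≤ n) (hr : r ≤ Module.finrank Fq Fqm)
    (h : Module.finrank Fq Fqm * n < s * r + Module.finrank Fq Fqm * Module.finrank Fqm C1) :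
    RGRW q C1 C2 1 ≤ min s r := by
  obtain ⟨x, hx1, hx2, hx⟩ := exists_mem_notMem_rankWeight_le Fq
    (hs.trans_eq (Fintype.card_fin n).symm) hr (by rwa [Fintype.card_fin])
  exact (RGRW_one_le_rankWeight hq h12 hx1 hx2).trans hx

theorem RGRW_one_le_finrank (hq : Fintype.card Fq = q) (h12 : C2 < C1) :
    RGRW q C1 C2 1 ≤ Module.finrank Fq Fqm := by
  obtain ⟨x, hx1, hx2⟩ := SetLike.exists_of_lt h12
  exact (RGRW_one_le_rankWeight hq h12.le hx1 hx2).trans (Submodule.finrank_le _)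

theorem RGRW_one_le_sub_add_one (hq : Fintype.card Fq = q) (h12 : C2 < C1) :
    RGRW q C1 C2 1 ≤ n - Module.finrank Fqm C1 + 1 := by
  have hlt := Submodule.finrank_lt_finrank_of_lt h12
  have hle := finrank_submodule_fin_fun_le C1
  have hm : 0 < Module.finrank Fq Fqm := Module.finrank_pos
  refine (RGRW_one_le_min hq h12.le (by omega) le_rfl ?_).trans (min_le_left _ _)
  calc Module.finrank Fq Fqm * n
      < Module.finrank Fq Fqm * (n - Module.finrank Fqm C1 + 1 + Module.finrank Fqm C1) :=
        Nat.mul_lt_mul_of_pos_left (by omega) hm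
    _ = _ := by ring

theorem RGRW_one_le_div_add_one (hq : Fintype.card Fq = q) (h12 : C2 < C1) :
    RGRW q C1 C2 1 ≤ Module.finrank Fq Fqm * (n - Module.finrank Fqm C1) /
      (n - Module.finrank Fqm C2) + 1 := by
  have hlt := Submodule.finrank_lt_finrank_of_lt h12
  have hle := finrank_submodule_fin_fun_le C1
  have hm : 0 < Module.finrank Fq Fqm := Module.finrank_pos
  have hpos : 0 < n - Module.finrank Fqm C2 := by omega
  refine (RGRW_one_le_min hq h12.le (Nat.sub_add_cancel (hlt.le.trans hle)).le ?_ ?_).trans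
    (min_le_right _ _)
  · exact (Nat.div_lt_iff_lt_mul hpos).2 (Nat.mul_lt_mul_of_pos_left (by omega) hm)
  · calc Module.finrank Fq Fqm * n
        = Module.finrank Fq Fqm * (n - Module.finrank Fqm C1) +
            Module.finrank Fq Fqm * Module.finrank Fqm C1 := by
          rw [← mul_add, Nat.sub_add_cancel hle]
      _ < _ := Nat.add_lt_add_right (Nat.lt_mul_div_succ _ hpos) _

end Bounds

/-- The first RGRW satisfies (over the rationals)
`M_{R,1}(C1,C2) ≤ min{ n - dim C1, (m-1)(dim C1 - dim C2), m(n - dim C1)/(n - dim C2) } + 1`. -/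
theorem stmt9 (m n : ℕ) [Fintype Fq] [Fintype Fqm]
    (hq : Fintype.card Fq = q) (hm : Module.finrank Fq Fqm = m)
    (C1 C2 : Submodule Fqm (Fin n → Fqm)) (h12 : C2 < C1) :
    (RGRW q C1 C2 1 : ℚ) ≤
      min (min ((n : ℚ) - (Module.finrank Fqm ↥C1 : ℚ))
            (((m : ℚ) - 1) *
              ((Module.finrank Fqm ↥C1 : ℚ) - (Module.finrank Fqm ↥C2 : ℚ))))
          ((m : ℚ) * ((n : ℚ) - (Module.finrank Fqm ↥C1 : ℚ)) /
            ((n : ℚ) - (Module.finrank Fqm ↥C2 : ℚ))) + 1 := by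
  have hlt := Submodule.finrank_lt_finrank_of_lt h12
  have hle := finrank_submodule_fin_fun_le C1
  have hsingleton := RGRW_one_le_sub_add_one hq h12
  have hdegree := RGRW_one_le_finrank hq h12
  have hdiv := RGRW_one_le_div_add_one hq h12
  have hm_pos : 0 < Module.finrank Fq Fqm := Module.finrank_pos
  rw [hm] at hdegree hdiv hm_pos
  rw [← sub_le_iff_le_add, ← Nat.cast_sub hle, ← Nat.cast_sub (hlt.le.trans hle),
    ← Nat.cast_sub hlt.le, ← Nat.cast_pred hm_pos]
  refine le_min (le_min ?_ ?_) ?_ <;> rw [sub_le_iff_le_add]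
  · exact_mod_cast hsingleton
  · have hpred := Nat.le_mul_of_pos_right (m - 1) (Nat.sub_pos_of_lt hlt)
    exact_mod_cast hdegree.trans (Nat.le_add_of_sub_le hpred)
  · calc (RGRW q C1 C2 1 : ℚ)
        ≤ (m * (n - Module.finrank Fqm C1) / (n - Module.finrank Fqm C2) : ℕ) + 1 := by
          exact_mod_cast hdiv
      _ ≤ _ := by
          gcongr
          exact_mod_cast Nat.cast_div_le

end
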